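/- arXiv:2605.24401 — 5 statements merged into one kernel-verified Lean document; each statement's English description precedes it below -/
import Mathlib

section
/- Let d ≥ 1, let G ∈ ℝ^{d×d} be symmetric positive definite, and let τ ∈ ℝ^d be nonzero. Then for every g ∈ ℝ^d the following are equivalent: (i) Q_{⊥,G}(G g) = 0; (ii) (I − τ τᵀ/‖τ‖²) g = 0; (iii) g is a scalar multiple of τ. In other words, the zero set of the covariance-weighted oblique normal force coincides with the classical minimum-energy-path condition g ∥ τ. -/
/-!
Both vanishing conditions are compared with `g ∈ ℝ τ`. Since `τᵀGτ ≠ 0`, the equation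
`Q_{⊥,G}(Gg) = 0` says `Gg = c Gτ` with `c = (τᵀGg)/(τᵀGτ)`, and `G` is injective, so `g = c τ`;
conversely `g = c τ` forces this value of `c`. The orthogonal projection is handled in the same way,
using `(I − ττᵀ/‖τ‖²) g = g − (τᵀg/‖τ‖²) τ` and `τᵀτ ≠ 0`.
-/

open Matrix

/-- Oblique normal projection `Q_{⊥,G} z = z − Gτ (τᵀz)/(τᵀGτ)`. -/
noncomputable def Qperp {d : ℕ} (G : Matrix (Fin d) (Fin d) ℝ) (τ z : Fin d → ℝ) :
    Fin d → ℝ :=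
  z - ((τ ⬝ᵥ z) / (τ ⬝ᵥ G.mulVec τ)) • G.mulVec τ

/-- the zero set of the covariance-weighted oblique normal force
coincides with the classical MEP condition: `Q_{⊥,G}(Gg) = 0` iff
`(I − ττᵀ/‖τ‖²) g = 0` iff `g ∥ τ`. -/
theorem oblique_zero_set_is_MEP_condition {d : ℕ} (hd : 1 ≤ d)
    (G : Matrix (Fin d) (Fin d) ℝ) (hG : G.PosDef) (τ : Fin d → ℝ) (hτ : τ ≠ 0) :
    ∀ g : Fin d → ℝ,
      (Qperp G τ (G.mulVec g) = 0 ↔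
        ((1 : Matrix (Fin d) (Fin d) ℝ) - (τ ⬝ᵥ τ)⁻¹ • vecMulVec τ τ).mulVec g = 0) ∧
      (Qperp G τ (G.mulVec g) = 0 ↔ ∃ c : ℝ, g = c • τ) := by
  intro g
  have hτG : τ ⬝ᵥ G.mulVec τ ≠ 0 := by
    simpa using (hG.dotProduct_mulVec_pos hτ).ne'
  have hττ : τ ⬝ᵥ τ ≠ 0 := by simpa [dotProduct_self_eq_zero] using hτ
  have h13 : Qperp G τ (G.mulVec g) = 0 ↔ ∃ c : ℝ, g = c • τ := by
    constructor
    · intro h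
      refine ⟨(τ ⬝ᵥ G.mulVec g) / (τ ⬝ᵥ G.mulVec τ), ?_⟩
      -- a positive definite matrix is invertible, so `G` may be cancelled
      apply Matrix.mulVec_injective_of_isUnit hG.isUnit
      rw [mulVec_smul]
      exact sub_eq_zero.mp h
    · rintro ⟨c, rfl⟩
      rw [Qperp, mulVec_smul, dotProduct_smul, smul_eq_mul, mul_div_cancel_right₀ _ hτG, sub_self]
  have h23 : ((1 : Matrix (Fin d) (Fin d) ℝ) - (τ ⬝ᵥ τ)⁻¹ • vecMulVec τ τ).mulVec g = 0 ↔
      ∃ c : ℝ, g = c • τ := by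
    have key : ((1 : Matrix (Fin d) (Fin d) ℝ) - (τ ⬝ᵥ τ)⁻¹ • vecMulVec τ τ).mulVec g =
        g - ((τ ⬝ᵥ τ)⁻¹ * (τ ⬝ᵥ g)) • τ := by
      rw [sub_mulVec, one_mulVec, smul_mulVec, vecMulVec_mulVec, op_smul_eq_smul, smul_smul]
    rw [key, sub_eq_zero]
    constructor
    · exact fun h => ⟨_, h⟩
    · rintro ⟨c, rfl⟩
      congr 1
      rw [dotProduct_smul, smul_eq_mul]
      field_simp
  exact ⟨h13.trans h23.symm, h13⟩
end

section
/- Let d ≥ 1, let G ∈ ℝ^{d×d} be symmetric positive definite, let τ ∈ ℝ^d be nonzero, and let g ∈ ℝ^d. Set s* := −Q_{⊥,G}(G g). Then gᵀ s* = −(s*)ᵀ G⁻¹ s* ≤ 0, and gᵀ s* = 0 if and only if g is a scalar multiple of τ. In particular, along the covariance-weighted oblique normal force, the inner product with the gradient is nonpositive and vanishes exactly on the classical minimum-energy-path stationary set. -/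
/-!
Let `c = (τᵀGg)/(τᵀGτ)` and `w = g - cτ`, the component of `g` orthogonal to `τ` for the inner
product `(u, v) ↦ uᵀGv`. Then `Q_{⊥,G}(Gg) = Gw` and `τᵀGw = 0`, so `s* = -Gw` and
`gᵀs* = -wᵀGw = -(s*)ᵀG⁻¹s*`. Positive definiteness makes this nonpositive, and zero only
for `w = 0`, that is `g = cτ`.
-/

open Matrix

/-- along `s* = −Q_{⊥,G}(Gg)` one has
`gᵀ s* = −(s*)ᵀ G⁻¹ s* ≤ 0`, with equality to zero exactly when `g ∥ τ`. -/
theorem oblique_step_descent_identity {d : ℕ} (hd : 1 ≤ d)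
    (G : Matrix (Fin d) (Fin d) ℝ) (hG : G.PosDef) (τ : Fin d → ℝ) (hτ : τ ≠ 0)
    (g : Fin d → ℝ) :
    g ⬝ᵥ (-(Qperp G τ (G.mulVec g)))
        = -((-(Qperp G τ (G.mulVec g))) ⬝ᵥ G⁻¹.mulVec (-(Qperp G τ (G.mulVec g)))) ∧
    g ⬝ᵥ (-(Qperp G τ (G.mulVec g))) ≤ 0 ∧
    (g ⬝ᵥ (-(Qperp G τ (G.mulVec g))) = 0 ↔ ∃ c : ℝ, g = c • τ) := by
  have hτG : 0 < τ ⬝ᵥ G *ᵥ τ := by simpa using hG.dotProduct_mulVec_pos hτ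
  -- `w` is the `G`-orthogonal component of `g` relative to `τ`.
  obtain ⟨c, hc⟩ : ∃ c, c = (τ ⬝ᵥ G *ᵥ g) / (τ ⬝ᵥ G *ᵥ τ) := ⟨_, rfl⟩
  obtain ⟨w, hw⟩ : ∃ w, w = g - c • τ := ⟨_, rfl⟩
  have hQ : Qperp G τ (G *ᵥ g) = G *ᵥ w := by
    rw [Qperp, hw, ← hc, mulVec_sub, mulVec_smul]
  have horth : τ ⬝ᵥ G *ᵥ w = 0 := by
    rw [hw, mulVec_sub, mulVec_smul, dotProduct_sub, dotProduct_smul, smul_eq_mul, hc,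
      div_mul_cancel₀ _ hτG.ne', sub_self]
  have hg : g = w + c • τ := by rw [hw, sub_add_cancel]
  have hgw : g ⬝ᵥ G *ᵥ w = w ⬝ᵥ G *ᵥ w := by
    conv_lhs => rw [hg]
    rw [add_dotProduct, smul_dotProduct, horth, smul_zero, add_zero]
  have hinv : G⁻¹ *ᵥ (G *ᵥ w) = w := by
    rw [mulVec_mulVec, nonsing_inv_mul _ ((isUnit_iff_isUnit_det G).mp hG.isUnit), one_mulVec]
  have hnonneg : 0 ≤ w ⬝ᵥ G *ᵥ w := by
    simpa using hG.posSemidef.dotProduct_mulVec_nonneg w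
  rw [hQ, mulVec_neg, hinv, dotProduct_neg, neg_dotProduct_neg, hgw]
  refine ⟨by rw [dotProduct_comm], neg_nonpos.mpr hnonneg, ?_⟩
  rw [neg_eq_zero]
  constructor
  · intro h
    have hw0 : w = 0 := by
      by_contra hne
      have hpos : 0 < w ⬝ᵥ G *ᵥ w := by simpa using hG.dotProduct_mulVec_pos hne
      exact hpos.ne' h
    exact ⟨c, by rw [hg, hw0, zero_add]⟩
  · rintro ⟨a, ha⟩
    rw [← hgw, ha, smul_dotProduct, horth, smul_zero]
end

section
/- Let d ≥ 2, let H ∈ ℝ^{d×d} be symmetric, let v ∈ ℝ^d be a unit vector with H v = λ₁ v for some λ₁ < 0, and suppose wᵀ H w > 0 for every nonzero w with vᵀ w = 0 (H is positive definite on the orthogonal complement of v). Then the matrix R_v H, where R_v = −I + 2 v vᵀ, is symmetric and negative definite: zᵀ (R_v H) z < 0 for every nonzero z ∈ ℝ^d. -/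
/-!
Since `H` is symmetric and `H v = λ₁ v`, also `vᵀ H = λ₁ vᵀ`, so `R_v H = -H + 2 λ₁ v vᵀ`, which is
visibly symmetric. Writing `z = c v + w` with `c = vᵀ z` and `w ⊥ v`, the cross terms vanish and
`zᵀ R_v H z = λ₁ c² - wᵀ H w`. Both terms are nonpositive, and they cannot both vanish unless
`z = 0`.
-/

open Matrix

/-- at a nondegenerate index-one saddle Hessian `H` (unstable
unit eigenvector `v` with eigenvalue `λ₁ < 0`, positive definite on `v⊥`), the
reflected Hessian `R_v H` with `R_v = −I + 2vvᵀ` is symmetric and negative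
definite. -/
theorem reflected_hessian_negative_definite {d : ℕ} (hd : 2 ≤ d)
    (H : Matrix (Fin d) (Fin d) ℝ) (hH : H.IsSymm) (v : Fin d → ℝ)
    (hv : v ⬝ᵥ v = 1) (lam1 : ℝ) (hlam1 : lam1 < 0)
    (heig : H.mulVec v = lam1 • v)
    (hpos : ∀ w : Fin d → ℝ, w ≠ 0 → v ⬝ᵥ w = 0 → 0 < w ⬝ᵥ H.mulVec w) :
    ((-(1 : Matrix (Fin d) (Fin d) ℝ) + 2 • vecMulVec v v) * H).IsSymm ∧
    ∀ z : Fin d → ℝ, z ≠ 0 →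
      z ⬝ᵥ ((-(1 : Matrix (Fin d) (Fin d) ℝ) + 2 • vecMulVec v v) * H).mulVec z < 0 := by
  have hvH : v ᵥ* H = lam1 • v := by
    rw [← heig, ← mulVec_transpose, hH.eq]
  have hR : (-(1 : Matrix (Fin d) (Fin d) ℝ) + 2 • vecMulVec v v) * H
      = -H + (2 * lam1) • vecMulVec v v := by
    rw [add_mul, neg_mul, one_mul, smul_mul_assoc, vecMulVec_mul, hvH, vecMulVec_smul,
      mul_smul, two_smul ℕ, two_smul ℝ]
  rw [hR]
  refine ⟨?_, fun z hz => ?_⟩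
  · rw [IsSymm, transpose_add, transpose_neg, hH.eq, transpose_smul, transpose_vecMulVec]
  · obtain ⟨c, hc⟩ : ∃ c, v ⬝ᵥ z = c := ⟨_, rfl⟩
    have hzv : z ⬝ᵥ v = c := by rw [dotProduct_comm, hc]
    have hvHz : v ⬝ᵥ H *ᵥ z = lam1 * c := by
      rw [dotProduct_mulVec, hvH, smul_dotProduct, hc, smul_eq_mul]
    have hquad : z ⬝ᵥ (-H + (2 * lam1) • vecMulVec v v) *ᵥ z
        = -(z ⬝ᵥ H *ᵥ z) + 2 * lam1 * c ^ 2 := by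
      simp only [add_mulVec, neg_mulVec, smul_mulVec, vecMulVec_mulVec, dotProduct_add,
        dotProduct_neg, dotProduct_smul, hc, hzv, smul_eq_mul, op_smul_eq_smul]
      ring
    -- `z - c • v` is the component of `z` orthogonal to `v`.
    have hw : (z - c • v) ⬝ᵥ H *ᵥ (z - c • v) = z ⬝ᵥ H *ᵥ z - lam1 * c ^ 2 := by
      simp only [mulVec_sub, mulVec_smul, heig, sub_dotProduct, dotProduct_sub, smul_dotProduct,
        dotProduct_smul, hvHz, hzv, hv, smul_eq_mul]
      ring
    have horth : v ⬝ᵥ (z - c • v) = 0 := by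
      simp [dotProduct_sub, hc, hv]
    rw [hquad]
    by_cases h0 : z - c • v = 0
    · have hc0 : c ≠ 0 := by
        rintro rfl
        exact hz (by simpa using h0)
      rw [h0] at hw
      simp only [zero_dotProduct] at hw
      nlinarith [mul_neg_of_neg_of_pos hlam1 (sq_pos_of_ne_zero hc0)]
    · have := hpos _ h0 horth
      nlinarith [mul_nonpos_of_nonpos_of_nonneg hlam1.le (sq_nonneg c)]
end

section
/- Let d ≥ 2 and let Ē : ℝ^d → ℝ be twice continuously differentiable with locally Lipschitz second derivative. Let x† ∈ ℝ^d satisfy ∇Ē(x†) = 0, and suppose the Hessian H† = ∇²Ē(x†) is invertible with exactly one negative eigenvalue λ₁ < 0, which is simple, with unit eigenvector v†, and all other eigenvalues positive (nondegenerate index-one saddle with spectral gap). Define the Dimer residual R_D(x, v) = ‖(I − v vᵀ) ∇²Ē(x) v‖² + ‖−∇Ē(x) + 2 v vᵀ ∇Ē(x)‖² for x ∈ ℝ^d and unit vectors v. Then there exist a neighborhood U of the set {(x†, v†), (x†, −v†)} in ℝ^d × S^{d−1} and constants c⁻, c⁺ > 0 such that for all (x, v) ∈ U: c⁻ · dist((x,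 v), {(x†, v†), (x†, −v†)})² ≤ R_D(x, v) ≤ c⁺ · dist((x, v), {(x†, v†), (x†, −v†)})². -/
/-!
The residual is even in `v`, so it suffices to compare it with the squared distance to `(x†, v†)`
alone. Write `H = ∇²E(x†)`, `s = ‖x - x†‖`, `t = ‖v - v†‖`.

* For unit `v` the map `z ↦ -z + 2⟪v, z⟫v` is an isometry, so the second part of the residual is
  `‖∇E(x)‖²`, which is comparable with `s²` because `∇E(x) = H(x - x†) + o(s)` and `H` is injective.
* For unit `v` the map `z ↦ z - ⟪v, z⟫v` is a contraction, so replacing `∇²E(x)` by `H` in the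
  orientation part costs `O(s)`, by the Lipschitz bound on the Hessian (`hessOp_sub_le`).
  With `H` in place, the orientation part is at most `‖(H - λ₁)v‖ = ‖(H - λ₁)(v - v†)‖ = O(t)`.
  Conversely, put `u = v - ⟪v†, v⟫v†` and `μ = ⟪v, Hv⟫`. Since `u ⊥ v†`,
  `⟪u, Hv - μv⟫ = ⟪u, Hu⟫ - μ‖u‖² ≥ b‖u‖²` as soon as `μ ≤ 0`, which holds near `v†`; and `‖u‖` is
  comparable with `t` (`orientation_lower`).
-/

open scoped RealInnerProductSpace

/-- The Hessian of `E` at `x`, acting on vectors, realized as the derivative of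
the gradient field. -/
noncomputable def hessOp {d : ℕ} (E : EuclideanSpace ℝ (Fin d) → ℝ)
    (x : EuclideanSpace ℝ (Fin d)) :
    EuclideanSpace ℝ (Fin d) →L[ℝ] EuclideanSpace ℝ (Fin d) :=
  fderiv ℝ (gradient E) x

/-- The Dimer stationarity residual
`R_D(x,v) = ‖(I − vvᵀ)∇²E(x)v‖² + ‖−∇E(x) + 2vvᵀ∇E(x)‖²` (for unit `v`,
`vvᵀz = ⟪v,z⟫ v`). -/
noncomputable def dimerResidual {d : ℕ} (E : EuclideanSpace ℝ (Fin d) → ℝ)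
    (x v : EuclideanSpace ℝ (Fin d)) : ℝ :=
  ‖hessOp E x v - ⟪v, hessOp E x v⟫ • v‖ ^ 2
    + ‖-(gradient E x) + (2 * ⟪v, gradient E x⟫) • v‖ ^ 2

section DimerHelpers

variable {d : ℕ}

/-- The inverse Riesz isomorphism as an `ℝ`-linear map; Mathlib's `toDual` is conjugate-linear. -/
noncomputable def rieszInv (d : ℕ) :
    StrongDual ℝ (EuclideanSpace ℝ (Fin d)) →L[ℝ] EuclideanSpace ℝ (Fin d) where
  toFun := (InnerProductSpace.toDual ℝ (EuclideanSpace ℝ (Fin d))).symm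
  map_add' := map_add _
  map_smul' c y := by simp
  cont := (InnerProductSpace.toDual ℝ (EuclideanSpace ℝ (Fin d))).symm.continuous

lemma hasFDerivAt_gradient_riesz (E : EuclideanSpace ℝ (Fin d) → ℝ) (hE : ContDiff ℝ 2 E)
    (x : EuclideanSpace ℝ (Fin d)) :
    HasFDerivAt (gradient E) ((rieszInv d).comp (fderiv ℝ (fderiv ℝ E) x)) x := by
  have hdiff : DifferentiableAt ℝ (fderiv ℝ E) x :=
    ((hE.fderiv_right (m := 1) (by norm_num)).differentiable (by norm_num)) x
  exact (rieszInv d).hasFDerivAt.comp x hdiff.hasFDerivAt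

lemma hasFDerivAt_gradient (E : EuclideanSpace ℝ (Fin d) → ℝ) (hE : ContDiff ℝ 2 E)
    (x : EuclideanSpace ℝ (Fin d)) : HasFDerivAt (gradient E) (hessOp E x) x :=
  (hasFDerivAt_gradient_riesz E hE x).differentiableAt.hasFDerivAt

/-- The pairing of the Hessian operator with vectors is the second iterated derivative. -/
lemma inner_hessOp (E : EuclideanSpace ℝ (Fin d) → ℝ) (hE : ContDiff ℝ 2 E)
    (x p q : EuclideanSpace ℝ (Fin d)) :
    ⟪hessOp E x p, q⟫ = iteratedFDeriv ℝ 2 E x ![p, q] := by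
  rw [hessOp, (hasFDerivAt_gradient_riesz E hE x).fderiv, iteratedFDeriv_two_apply]
  exact InnerProductSpace.toDual_symm_apply

lemma hessOp_sub_le (E : EuclideanSpace ℝ (Fin d) → ℝ) (hE : ContDiff ℝ 2 E)
    (x y p : EuclideanSpace ℝ (Fin d)) :
    ‖hessOp E x p - hessOp E y p‖ ≤ ‖iteratedFDeriv ℝ 2 E x - iteratedFDeriv ℝ 2 E y‖ * ‖p‖ := by
  set r := hessOp E x p - hessOp E y p with hr
  rcases eq_or_ne r 0 with h0 | h0
  · rw [h0, norm_zero]; positivity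
  have h1 : ‖r‖ * ‖r‖ = (iteratedFDeriv ℝ 2 E x - iteratedFDeriv ℝ 2 E y) ![p, r] := by
    rw [← real_inner_self_eq_norm_mul_norm]
    nth_rewrite 1 [hr]
    rw [inner_sub_left, inner_hessOp E hE, inner_hessOp E hE]
    rfl
  have h2 := (iteratedFDeriv ℝ 2 E x - iteratedFDeriv ℝ 2 E y).le_opNorm ![p, r]
  rw [← h1, Fin.prod_univ_two] at h2
  simp only [Matrix.cons_val_zero, Matrix.cons_val_one, norm_mul, norm_norm] at h2
  have : 0 < ‖r‖ := norm_pos_iff.mpr h0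
  exact le_of_mul_le_mul_right (by linarith) this

/-- A continuous function positive on the nonzero vectors of `v⊥` and homogeneous of degree `n` is bounded below
there by a multiple of `‖w‖ ^ n`. The condition `⟪v, w⟫ = 0` is void for `v = 0`. -/
lemma exists_homogeneous_lower (v : EuclideanSpace ℝ (Fin d)) (n : ℕ)
    (f : EuclideanSpace ℝ (Fin d) → ℝ) (hf : Continuous f)
    (hhom : ∀ (c : ℝ) w, 0 ≤ c → f (c • w) = c ^ n * f w)
    (hpos : ∀ w, ⟪v, w⟫ = 0 → w ≠ 0 → 0 < f w) :
    ∃ b : ℝ, 0 < b ∧ ∀ w, ⟪v, w⟫ = 0 → w ≠ 0 → b * ‖w‖ ^ n ≤ f w := by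
  have hc : IsCompact (Metric.sphere (0 : EuclideanSpace ℝ (Fin d)) 1 ∩ {w | ⟪v, w⟫ = 0}) :=
    (isCompact_sphere _ _).inter_right (isClosed_eq (by fun_prop) continuous_const)
  obtain ⟨b, hb, hb'⟩ := hc.exists_forall_le' (a := 0) hf.continuousOn (by
    rintro w ⟨hw1, hw2⟩
    refine hpos w hw2 ?_
    rintro rfl
    simp at hw1)
  refine ⟨b, hb, fun w hw hw0 => ?_⟩
  have hn : 0 < ‖w‖ := norm_pos_iff.mpr hw0
  have h1 := hb' (‖w‖⁻¹ • w) ⟨by simp [norm_smul, hn.ne'], by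
    simp only [Set.mem_ofPred_eq, inner_smul_right, hw, mul_zero]⟩
  rw [hhom _ _ (by positivity), inv_pow] at h1
  rwa [inv_mul_eq_div, le_div_iff₀ (by positivity)] at h1

lemma norm_reflect (v z : EuclideanSpace ℝ (Fin d)) (hv : ‖v‖ = 1) :
    ‖-z + (2 * ⟪v, z⟫) • v‖ ^ 2 = ‖z‖ ^ 2 := by
  rw [norm_add_sq_real, norm_smul, mul_pow, hv, inner_neg_left, inner_smul_right, norm_neg,
    real_inner_comm, Real.norm_eq_abs, sq_abs]
  ring

lemma norm_proj_le (v z : EuclideanSpace ℝ (Fin d)) (hv : ‖v‖ = 1) :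
    ‖z - ⟪v, z⟫ • v‖ ≤ ‖z‖ := by
  have h : ‖z - ⟪v, z⟫ • v‖ ^ 2 = ‖z‖ ^ 2 - ⟪v, z⟫ ^ 2 := by
    rw [norm_sub_sq_real, norm_smul, mul_pow, hv, inner_smul_right, real_inner_comm,
      Real.norm_eq_abs, sq_abs]
    ring
  exact le_of_sq_le_sq (by nlinarith [sq_nonneg ⟪v, z⟫]) (norm_nonneg _)

/-- The orientation residual of a fixed operator controls the distance of `v` to the eigenvector
`e` of the negative eigenvalue, as long as `v` is on the side of `e` and has nonpositive Rayleigh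
quotient. Symmetry of `H` is not needed. -/
lemma orientation_lower (H : EuclideanSpace ℝ (Fin d) →L[ℝ] EuclideanSpace ℝ (Fin d))
    (e v : EuclideanSpace ℝ (Fin d)) (l b : ℝ) (he : ‖e‖ = 1) (hv : ‖v‖ = 1) (hb : 0 < b)
    (heig : H e = l • e) (hpos : ∀ w, ⟪e, w⟫ = 0 → w ≠ 0 → b * ‖w‖ ^ 2 ≤ ⟪w, H w⟫)
    (hmu : ⟪v, H v⟫ ≤ 0) (hal : 0 ≤ ⟪e, v⟫) :
    b * ‖v - e‖ ≤ 2 * ‖H v - ⟪v, H v⟫ • v‖ := by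
  set α := ⟪e, v⟫ with hα
  set μ := ⟪v, H v⟫ with hμ
  set u := v - α • e with hu
  have hee : ⟪e, e⟫ = 1 := by rw [real_inner_self_eq_norm_sq, he]; norm_num
  have heu : ⟪e, u⟫ = 0 := by rw [hu, inner_sub_right, inner_smul_right, hee]; ring
  have hue : ⟪u, e⟫ = 0 := by rw [real_inner_comm]; exact heu
  have hveq : v = α • e + u := by rw [hu]; abel
  have ht : ‖v - e‖ ^ 2 = 2 - 2 * α := by
    rw [norm_sub_sq_real, hv, he, real_inner_comm, ← hα]; ring
  have hun : ‖u‖ ^ 2 = 1 - α ^ 2 := by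
    rw [hu, norm_sub_sq_real, norm_smul, mul_pow, hv, he, inner_smul_right, real_inner_comm,
      ← hα, Real.norm_eq_abs, sq_abs]
    ring
  have htu : ‖v - e‖ ≤ 2 * ‖u‖ := by
    refine le_of_sq_le_sq ?_ (by positivity)
    nlinarith [sq_nonneg ‖v - e‖]
  rcases eq_or_ne u 0 with h0 | h0
  · rw [h0, norm_zero, mul_zero] at htu
    have : ‖v - e‖ = 0 := le_antisymm htu (norm_nonneg _)
    rw [this]; simp
  have hup : 0 < ‖u‖ := norm_pos_iff.mpr h0
  have hkey : ⟪u, H v - μ • v⟫ = ⟪u, H u⟫ - μ * ‖u‖ ^ 2 := by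
    have h1 : H v = (α * l) • e + H u := by
      rw [congrArg H hveq, map_add, map_smul, heig, smul_smul]
    have h2 : ⟪u, v⟫ = ‖u‖ ^ 2 := by
      rw [congrArg (fun z => ⟪u, z⟫) hveq, inner_add_right, inner_smul_right, hue,
        real_inner_self_eq_norm_sq]
      ring
    rw [inner_sub_right, inner_smul_right, h2, h1, inner_add_right, inner_smul_right, hue]
    ring
  have h3 := real_inner_le_norm u (H v - μ • v)
  have h4 := hpos u heu h0
  have h5 : b * ‖u‖ ≤ ‖H v - μ • v‖ := by
    refine le_of_mul_le_mul_right ?_ hup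
    nlinarith [sq_nonneg ‖u‖]
  nlinarith

lemma dimerResidual_neg (E : EuclideanSpace ℝ (Fin d) → ℝ) (x v : EuclideanSpace ℝ (Fin d)) :
    dimerResidual E x (-v) = dimerResidual E x v := by
  have h : hessOp E x (-v) - ⟪-v, hessOp E x (-v)⟫ • (-v)
      = -(hessOp E x v - ⟪v, hessOp E x v⟫ • v) := by
    rw [map_neg, inner_neg_neg, smul_neg]; abel
  rw [dimerResidual, dimerResidual, h, norm_neg, inner_neg_left, mul_neg, smul_neg, neg_smul,
    neg_neg]

end DimerHelpers

/-- near a nondegenerate index-one saddle `x†` with simple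
negative eigenvalue `λ₁ < 0`, unit eigenvector `v†`, and all remaining
eigenvalues positive, the Dimer residual is two-sidedly equivalent to the
squared distance to the two-point set `{(x†, v†), (x†, −v†)}` on
`ℝ^d × S^{d−1}`. -/
theorem dimer_residual_local_equivalence {d : ℕ} (hd : 2 ≤ d)
    (E : EuclideanSpace ℝ (Fin d) → ℝ) (hE : ContDiff ℝ 2 E)
    (hLip : LocallyLipschitz (iteratedFDeriv ℝ 2 E))
    (xd vd : EuclideanSpace ℝ (Fin d)) (lam1 : ℝ)
    (hcrit : gradient E xd = 0) (hv : ‖vd‖ = 1) (hlam : lam1 < 0)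
    (hinv : ∀ u : EuclideanSpace ℝ (Fin d), hessOp E xd u = 0 → u = 0)
    (heig : hessOp E xd vd = lam1 • vd)
    (hpos : ∀ w : EuclideanSpace ℝ (Fin d), ⟪vd, w⟫ = 0 → w ≠ 0 →
      0 < ⟪w, hessOp E xd w⟫) :
    ∃ δ : ℝ, 0 < δ ∧ ∃ cminus : ℝ, 0 < cminus ∧ ∃ cplus : ℝ, 0 < cplus ∧
      ∀ x v : EuclideanSpace ℝ (Fin d), ‖v‖ = 1 →
        min (dist (x, v) (xd, vd)) (dist (x, v) (xd, -vd)) < δ →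
        cminus * (min (dist (x, v) (xd, vd)) (dist (x, v) (xd, -vd))) ^ 2
            ≤ dimerResidual E x v ∧
        dimerResidual E x v
            ≤ cplus * (min (dist (x, v) (xd, vd)) (dist (x, v) (xd, -vd))) ^ 2 := by
  classical
  set H := hessOp E xd with hH
  obtain ⟨a, ha, ha'⟩ := exists_homogeneous_lower (0 : EuclideanSpace ℝ (Fin d)) 1
    (fun w => ‖H w‖) (by fun_prop)
    (fun c w hc => by simp [norm_smul, abs_of_nonneg hc])
    (fun w _ hw => norm_pos_iff.mpr fun h => hw (hinv w h))
  obtain ⟨b, hb, hb'⟩ := exists_homogeneous_lower vd 2 (fun w => ⟪w, H w⟫) (by fun_prop)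
    (fun c w hc => by
      simp only [map_smul, inner_smul_left, inner_smul_right, conj_trivial]; ring) hpos
  obtain ⟨K, U, hU, hK⟩ := hLip xd
  have haH : ∀ w, a * ‖w‖ ≤ ‖H w‖ := by
    intro w
    rcases eq_or_ne w 0 with rfl | hw
    · simp
    · simpa using ha' w (by simp) hw
  have hgrad : ∀ᶠ x in nhds xd, ‖gradient E x - H (x - xd)‖ ≤ a / 2 * ‖x - xd‖ := by
    have h := (hasFDerivAt_gradient E hE xd).isLittleO.def (half_pos ha)
    filter_upwards [h] with x hx
    simpa [hcrit] using hx
  have hmu : ∀ᶠ v in nhds vd, ⟪v, H v⟫ < 0 := by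
    have hc : Continuous fun v : EuclideanSpace ℝ (Fin d) => ⟪v, H v⟫ := by fun_prop
    refine hc.continuousAt.eventually_lt continuousAt_const ?_
    rw [heig, inner_smul_right, real_inner_self_eq_norm_sq, hv]
    simpa using hlam
  have hal : ∀ᶠ v in nhds vd, 0 < ⟪vd, v⟫ := by
    have hc : Continuous fun v : EuclideanSpace ℝ (Fin d) => ⟪vd, v⟫ := by fun_prop
    refine continuousAt_const.eventually_lt hc.continuousAt ?_
    rw [real_inner_self_eq_norm_sq, hv]
    norm_num
  have hall := ((hgrad.and hU).prod_nhds (hmu.and hal))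
  obtain ⟨δ, hδ, hball⟩ := Metric.eventually_nhds_iff.mp hall
  set C1 : ℝ := ‖H‖ + a / 2 with hC1
  set C2 : ℝ := K + (‖H‖ + |lam1|) with hC2
  have hC1p : 0 < C1 := by positivity
  have hC2p : 0 ≤ C2 := by positivity
  set M : ℝ := 2 / a + (2 / b) * (1 + K * (2 / a)) with hM
  have hMp : 0 < M := by positivity
  -- The comparison with the single point `(xd, vd)`; the point `(xd, -vd)` follows by evenness.
  have main : ∀ x v : EuclideanSpace ℝ (Fin d), ‖v‖ = 1 → dist (x, v) (xd, vd) < δ →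
      (1 / (2 * M ^ 2)) * dist (x, v) (xd, vd) ^ 2 ≤ dimerResidual E x v ∧
      dimerResidual E x v ≤ (C2 ^ 2 + C1 ^ 2) * dist (x, v) (xd, vd) ^ 2 := by
    intro x v hv1 hlt
    obtain ⟨⟨hg, hxU⟩, hm, hα⟩ := hball hlt
    dsimp only at hg hxU hm hα
    have hD : dist (x, v) (xd, vd) = max ‖x - xd‖ ‖v - vd‖ := by
      rw [Prod.dist_eq, dist_eq_norm, dist_eq_norm]
    set D := dist (x, v) (xd, vd) with hDdef
    have hs : ‖x - xd‖ ≤ D := hD ▸ le_max_left _ _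
    have ht : ‖v - vd‖ ≤ D := hD ▸ le_max_right _ _
    have hD0 : 0 ≤ D := dist_nonneg
    set A := hessOp E x v - ⟪v, hessOp E x v⟫ • v with hA
    have hR : dimerResidual E x v = ‖A‖ ^ 2 + ‖gradient E x‖ ^ 2 := by
      rw [dimerResidual, norm_reflect v _ hv1]
    -- Freezing the Hessian at `xd` changes the orientation residual by `O(‖x - xd‖)`.
    have hfreeze : ‖A - (H v - ⟪v, H v⟫ • v)‖ ≤ K * ‖x - xd‖ := by
      have h1 : A - (H v - ⟪v, H v⟫ • v)
          = (hessOp E x v - H v) - ⟪v, hessOp E x v - H v⟫ • v := by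
        rw [hA, inner_sub_right, sub_smul]; abel
      rw [h1]
      refine (norm_proj_le v _ hv1).trans ?_
      have h2 := hessOp_sub_le E hE x xd v
      rw [hv1, mul_one, ← dist_eq_norm (iteratedFDeriv ℝ 2 E x)] at h2
      refine h2.trans ?_
      rw [← dist_eq_norm]
      exact hK.dist_le_mul x hxU xd (mem_of_mem_nhds hU)
    have hHv : ‖H v - ⟪v, H v⟫ • v‖ ≤ (‖H‖ + |lam1|) * ‖v - vd‖ := by
      -- The projection kills `lam1 • v`, and `H - lam1` kills `vd`.
      have h1 : H v - ⟪v, H v⟫ • v = (H v - lam1 • v) - ⟪v, H v - lam1 • v⟫ • v := by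
        rw [inner_sub_right, inner_smul_right, real_inner_self_eq_norm_sq, hv1, sub_smul]
        norm_num
      have h2 : H v - lam1 • v = H (v - vd) - lam1 • (v - vd) := by
        rw [map_sub, heig, smul_sub]; abel
      rw [h1]
      refine (norm_proj_le v _ hv1).trans ?_
      rw [h2]
      refine (norm_sub_le _ _).trans ?_
      rw [norm_smul, Real.norm_eq_abs, add_mul]
      gcongr
      exact H.le_opNorm _
    have hlow := orientation_lower H vd v lam1 b hv hv1 hb heig hb' hm.le hα.le
    have hAup : ‖A‖ ≤ C2 * D := by
      have h1 := norm_le_norm_sub_add A (H v - ⟪v, H v⟫ • v)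
      have h2 : (K : ℝ) * ‖x - xd‖ ≤ K * D := by gcongr
      have h3 : (‖H‖ + |lam1|) * ‖v - vd‖ ≤ (‖H‖ + |lam1|) * D := by gcongr
      rw [hC2, add_mul]
      linarith
    have hHx := haH (x - xd)
    have hgup : ‖gradient E x‖ ≤ C1 * D := by
      have h1 := norm_le_norm_sub_add (gradient E x) (H (x - xd))
      have h2 := H.le_opNorm (x - xd)
      have h3 : C1 * ‖x - xd‖ ≤ C1 * D := by gcongr
      rw [hC1, add_mul] at h3
      rw [hC1]
      linarith
    have hslow : ‖x - xd‖ ≤ 2 / a * ‖gradient E x‖ := by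
      have h1 := norm_le_norm_sub_add (H (x - xd)) (gradient E x)
      rw [norm_sub_rev] at h1
      rw [div_mul_eq_mul_div, le_div_iff₀ ha]
      linarith
    have htlow : ‖v - vd‖ ≤ 2 / b * (‖A‖ + K * (2 / a * ‖gradient E x‖)) := by
      have h1 := norm_le_norm_sub_add (H v - ⟪v, H v⟫ • v) A
      rw [norm_sub_rev _ A] at h1
      have h2 : (K : ℝ) * ‖x - xd‖ ≤ K * (2 / a * ‖gradient E x‖) := by gcongr
      rw [div_mul_eq_mul_div, le_div_iff₀ hb]
      linarith
    have hDlow : D ≤ M * (‖A‖ + ‖gradient E x‖) := by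
      have hK0 : (0 : ℝ) ≤ K := K.2
      have e1 : 0 ≤ 2 / a * ‖A‖ := by positivity
      have e2 : 0 ≤ 2 / b * ‖A‖ := by positivity
      have e3 : 0 ≤ 2 / b * ‖gradient E x‖ := by positivity
      have e4 : 0 ≤ 2 / b * (K * (2 / a)) * ‖A‖ := by positivity
      have e5 : 0 ≤ 2 / b * (K * (2 / a)) * ‖gradient E x‖ := by positivity
      have e6 : 0 ≤ 2 / a * ‖gradient E x‖ := by positivity
      rw [hD, hM]
      refine max_le ?_ ?_ <;> linarith
    constructor
    · rw [hR, div_mul_eq_mul_div, div_le_iff₀ (by positivity), one_mul]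
      calc D ^ 2 ≤ (M * (‖A‖ + ‖gradient E x‖)) ^ 2 := by gcongr
        _ = M ^ 2 * (‖A‖ + ‖gradient E x‖) ^ 2 := by ring
        _ ≤ M ^ 2 * (2 * (‖A‖ ^ 2 + ‖gradient E x‖ ^ 2)) := by
          gcongr
          exact add_sq_le
        _ = _ := by ring
    · rw [hR, add_mul, ← mul_pow, ← mul_pow]
      gcongr
  refine ⟨δ, hδ, 1 / (2 * M ^ 2), by positivity, C2 ^ 2 + C1 ^ 2, by positivity, ?_⟩
  intro x v hv1 hlt
  have hflip : dist (x, v) (xd, -vd) = dist (x, -v) (xd, vd) := by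
    rw [Prod.dist_eq, Prod.dist_eq]
    simp only
    rw [← dist_neg_neg v (-vd), neg_neg]
  rcases le_total (dist (x, v) (xd, vd)) (dist (x, v) (xd, -vd)) with h | h
  · rw [min_eq_left h] at hlt ⊢
    exact main x v hv1 hlt
  · rw [min_eq_right h, hflip] at hlt ⊢
    have := main x (-v) (by rwa [norm_neg]) hlt
    rwa [dimerResidual_neg] at this
end

section
/- Let d ≥ 1, let τ ∈ ℝ^d be nonzero, let E : ℝ^d → ℝ be continuously differentiable, and let G : ℝ^d → ℝ^{d×d} be a continuous field of symmetric positive definite matrices. Suppose x : ℝ → ℝ^d is differentiable and solves x'(t) = −Q_{⊥,G(x(t))}( G(x(t)) ∇E(x(t)) ) for all t. Then the energy t ↦ E(x(t)) is differentiable with derivative d/dt E(x(t)) = ∇E(x(t))ᵀ x'(t) = −x'(t)ᵀ G(x(t))⁻¹ x'(t) ≤ 0 for all t; hence E is nonincreasing along the oblique covariance-weighted flow and serves as a Lyapunov function. -/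
/-!
Write `g = ∇E`, `c = (τᵀGg)/(τᵀGτ)` and `w = g - cτ`. By linearity the velocity is
`s = -Q_{⊥,G}(Gg) = -Gw`, so `G⁻¹s = -w`, and `τᵀs = 0` because `τᵀGτ ≠ 0`. Hence
`gᵀs = (w + cτ)ᵀs = wᵀs`, which is both `-sᵀG⁻¹s` and `-wᵀGw ≤ 0`. The derivative of
the energy along the flow is the chain rule.
-/

open scoped RealInnerProductSpace

/-- Action of a matrix on a Euclidean vector. -/
noncomputable def mulVecE {d : ℕ} (G : Matrix (Fin d) (Fin d) ℝ)
    (z : EuclideanSpace ℝ (Fin d)) : EuclideanSpace ℝ (Fin d) :=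
  (EuclideanSpace.equiv (Fin d) ℝ).symm (G.mulVec (EuclideanSpace.equiv (Fin d) ℝ z))

/-- Oblique normal projection `Q_{⊥,G} z = z − Gτ (τᵀz)/(τᵀGτ)` on Euclidean
space. -/
noncomputable def QperpE {d : ℕ} (G : Matrix (Fin d) (Fin d) ℝ)
    (τ z : EuclideanSpace ℝ (Fin d)) : EuclideanSpace ℝ (Fin d)  :=
  z - (⟪τ, z⟫ / ⟪τ, mulVecE G τ⟫) • mulVecE G τ

theorem mulVecE_eq_toLp {d : ℕ} (G : Matrix (Fin d) (Fin d) ℝ)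
    (u : EuclideanSpace ℝ (Fin d)) : mulVecE G u = WithLp.toLp 2 (G.mulVec u.ofLp) := rfl

theorem mulVecE_sub_smul {d : ℕ} (G : Matrix (Fin d) (Fin d) ℝ) (c : ℝ)
    (u v : EuclideanSpace ℝ (Fin d)) :
    mulVecE G (u - c • v) = mulVecE G u - c • mulVecE G v := by
  simp [mulVecE, Matrix.mulVec_sub, Matrix.mulVec_smul]

theorem mulVecE_neg {d : ℕ} (G : Matrix (Fin d) (Fin d) ℝ)
    (u : EuclideanSpace ℝ (Fin d)) : mulVecE G (-u) = -mulVecE G u := by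
  simp [mulVecE, Matrix.mulVec_neg]

theorem mulVecE_inv_mulVecE {d : ℕ} {G : Matrix (Fin d) (Fin d) ℝ} (hG : G.PosDef)
    (u : EuclideanSpace ℝ (Fin d)) : mulVecE G⁻¹ (mulVecE G u) = u := by
  have hdet : IsUnit G.det := isUnit_iff_ne_zero.mpr hG.det_pos.ne'
  simp [mulVecE_eq_toLp, Matrix.mulVec_mulVec, Matrix.nonsing_inv_mul G hdet]

theorem inner_mulVecE_pos {d : ℕ} {G : Matrix (Fin d) (Fin d) ℝ} (hG : G.PosDef)
    {u : EuclideanSpace ℝ (Fin d)} (hu : u ≠ 0) : 0 < ⟪u, mulVecE G u⟫ := by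
  have h : (u.ofLp : Fin d → ℝ) ≠ 0 := by simpa using hu
  have := hG.dotProduct_mulVec_pos h
  simpa [mulVecE_eq_toLp, EuclideanSpace.inner_eq_star_dotProduct, dotProduct_comm] using this

theorem inner_mulVecE_nonneg {d : ℕ} {G : Matrix (Fin d) (Fin d) ℝ} (hG : G.PosDef)
    (u : EuclideanSpace ℝ (Fin d)) : 0 ≤ ⟪u, mulVecE G u⟫ := by
  by_cases hu : u = 0
  · simp [hu]
  · exact (inner_mulVecE_pos hG hu).le

theorem inner_QperpE_eq_zero {d : ℕ} {G : Matrix (Fin d) (Fin d) ℝ} (hG : G.PosDef)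
    {τ : EuclideanSpace ℝ (Fin d)} (hτ : τ ≠ 0) (z : EuclideanSpace ℝ (Fin d)) :
    ⟪τ, QperpE G τ z⟫ = 0 := by
  have h := (inner_mulVecE_pos hG hτ).ne'
  rw [QperpE, inner_sub_right, real_inner_smul_right, div_mul_cancel₀ _ h, sub_self]

/-- The algebraic heart of the dissipation identity, for the direction
`s = -Q_{⊥,G}(Gg)` at a fixed point: `gᵀs = -sᵀG⁻¹s ≤ 0`. -/
theorem inner_neg_QperpE {d : ℕ} {G : Matrix (Fin d) (Fin d) ℝ} (hG : G.PosDef)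
    {τ : EuclideanSpace ℝ (Fin d)} (hτ : τ ≠ 0) (g s : EuclideanSpace ℝ (Fin d))
    (hs : s = -(QperpE G τ (mulVecE G g))) :
    ⟪g, s⟫ = -⟪s, mulVecE G⁻¹ s⟫ ∧ ⟪g, s⟫ ≤ 0 := by
  have hτs : ⟪τ, s⟫ = 0 := by
    rw [hs, inner_neg_right, inner_QperpE_eq_zero hG hτ, neg_zero]
  obtain ⟨c, hc⟩ : ∃ c : ℝ, s = -mulVecE G (g - c • τ) :=
    ⟨⟪τ, mulVecE G g⟫ / ⟪τ, mulVecE G τ⟫, by rw [hs, mulVecE_sub_smul, QperpE]⟩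
  have hinv : mulVecE G⁻¹ s = -(g - c • τ) := by
    rw [hc, mulVecE_neg, mulVecE_inv_mulVecE hG]
  have hgs : ⟪g, s⟫ = ⟪g - c • τ, s⟫ := by
    rw [inner_sub_left, real_inner_smul_left, hτs, mul_zero, sub_zero]
  refine ⟨?_, ?_⟩
  · rw [hinv, inner_neg_right, neg_neg, hgs, real_inner_comm]
  · rw [hgs, hc, inner_neg_right]
    exact neg_nonpos.mpr (inner_mulVecE_nonneg hG _)

/-- along any solution of the oblique covariance-weighted flow
`x'(t) = −Q_{⊥,G(x(t))}(G(x(t)) ∇E(x(t)))`, the energy `t ↦ E(x(t))` is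
differentiable with derivative `∇E(x(t))ᵀ x'(t) = −x'(t)ᵀ G(x(t))⁻¹ x'(t) ≤ 0`,
so `E` is nonincreasing along the flow and serves as a Lyapunov function. -/
theorem oblique_flow_energy_dissipation {d : ℕ} (hd : 1 ≤ d)
    (τ : EuclideanSpace ℝ (Fin d)) (hτ : τ ≠ 0)
    (E : EuclideanSpace ℝ (Fin d) → ℝ) (hE : ContDiff ℝ 1 E)
    (G : EuclideanSpace ℝ (Fin d) → Matrix (Fin d) (Fin d) ℝ)
    (hGcont : Continuous G) (hGpd : ∀ y, (G y).PosDef)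
    (x : ℝ → EuclideanSpace ℝ (Fin d)) (x' : ℝ → EuclideanSpace ℝ (Fin d))
    (hx' : ∀ t : ℝ,
      x' t = -(QperpE (G (x t)) τ (mulVecE (G (x t)) (gradient E (x t)))))
    (hx : ∀ t : ℝ, HasDerivAt x (x' t) t) :
    ∀ t : ℝ,
      HasDerivAt (fun s => E (x s)) (⟪gradient E (x t), x' t⟫) t ∧
      ⟪gradient E (x t), x' t⟫ = -⟪x' t, mulVecE (G (x t))⁻¹ (x' t)⟫ ∧
      ⟪gradient E (x t), x' t⟫ ≤ 0 := by
  intro t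
  refine ⟨?_, inner_neg_QperpE (hGpd (x t)) hτ _ _ (hx' t)⟩
  have hgrad : HasGradientAt E (gradient E (x t)) (x t) :=
    (hE.differentiable one_ne_zero (x t)).hasGradientAt
  exact hgrad.hasFDerivAt.comp_hasDerivAt t (hx t)
end
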